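/- For every integer n ≥ 1 and every proper cone C in a finite-dimensional real vector space, both pairs (L_n, C) and (C, L_n) are resilient, where L_n is the Lorentz cone. In particular, the Lorentz cone L_n is resilient for every n ≥ 1. -/

import Mathlib

open scoped TensorProduct
open Set

noncomputable section

/-- The dual cone of a set `C`, inside the algebraic dual space. -/
def dualConeSet {V : Type*} [AddCommGroup V] [Module ℝ V] (C : Set V) :
    Set (Module.Dual ℝ V) := {φ | ∀ x ∈ C, 0 ≤ φ x}

/-- A proper cone: a closed convex cone which is generating (`C - C = V`) and
pointed (`C ∩ (-C) = {0}`). -/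
def IsProperCone {V : Type*} [NormedAddCommGroup V] [NormedSpace ℝ V] (C : Set V) : Prop :=
  IsClosed C ∧ Convex ℝ C ∧ (∀ ⦃c : ℝ⦄, 0 < c → ∀ ⦃x⦄, x ∈ C → c • x ∈ C) ∧
    (∀ v : V, ∃ x ∈ C, ∃ y ∈ C, v = x - y) ∧ C ∩ (-C) = {0}

/-- `(C₁,C₂)`-entanglement breaking maps. -/
def IsEntanglementBreaking {V₁ V₂ : Type*} [AddCommGroup V₁] [Module ℝ V₁]
    [AddCommGroup V₂] [Module ℝ V₂] (C₁ : Set V₁) (C₂ : Set V₂) (P : V₁ →ₗ[ℝ] V₂) : Prop :=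
  ∃ (m : ℕ) (φ : Fin m → Module.Dual ℝ V₁) (x : Fin m → V₂),
    (∀ i, φ i ∈ dualConeSet C₁) ∧ (∀ i, x i ∈ C₂) ∧ ∀ v, P v = ∑ i, φ i v • x i

/-- The `k`-fold minimal tensor power of a cone. -/
def minTensorPow {V : Type*} [AddCommGroup V] [Module ℝ V] (C : Set V) (k : ℕ) :
    Set (⨂[ℝ] _ : Fin k, V) :=
  convexHull ℝ {z | ∃ x : Fin k → V, (∀ i, x i ∈ C) ∧ z = PiTensorProduct.tprod ℝ x}

/-- The functional on the `k`-fold tensor power induced by a family of functionals,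
`x₁ ⊗ ⋯ ⊗ x_k ↦ ∏ i, φ i (x i)`. -/
def dualPairing {V : Type*} [AddCommGroup V] [Module ℝ V] {k : ℕ}
    (φ : Fin k → Module.Dual ℝ V) : (⨂[ℝ] _ : Fin k, V) →ₗ[ℝ] ℝ :=
  PiTensorProduct.lift ((MultilinearMap.mkPiAlgebra ℝ (Fin k) ℝ).compLinearMap φ)

/-- The `k`-fold maximal tensor power of a cone: the dual of the minimal tensor power of
the dual cone, under the canonical identification of `(V^{⊗k})*` with `(V*)^{⊗k}`. -/
def maxTensorPow {V : Type*} [AddCommGroup V] [Module ℝ V] (C : Set V) (k : ℕ) :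
    Set (⨂[ℝ] _ : Fin k, V) :=
  {z | ∀ φ : Fin k → Module.Dual ℝ V, (∀ i, φ i ∈ dualConeSet C) → 0 ≤ dualPairing φ z}

/-- `(C₁,C₂)`-entanglement annihilating maps: `P^{⊗k}` maps the `k`-fold maximal tensor power
of `C₁` into the `k`-fold minimal tensor power of `C₂`, for every `k ≥ 1`. -/
def IsEntanglementAnnihilating {V₁ V₂ : Type*} [AddCommGroup V₁] [Module ℝ V₁]
    [AddCommGroup V₂] [Module ℝ V₂] (C₁ : Set V₁) (C₂ : Set V₂) (P : V₁ →ₗ[ℝ] V₂) : Prop :=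
  ∀ k : ℕ, 1 ≤ k →
    Set.MapsTo (⇑(PiTensorProduct.map fun _ : Fin k => P))
      (maxTensorPow C₁ k) (minTensorPow C₂ k)

/-- A pair of cones is resilient if every entanglement annihilating map between them is
entanglement breaking. -/
def IsResilientPair {V₁ V₂ : Type*} [AddCommGroup V₁] [Module ℝ V₁]
    [AddCommGroup V₂] [Module ℝ V₂] (C₁ : Set V₁) (C₂ : Set V₂) : Prop :=
  ∀ P : V₁ →ₗ[ℝ] V₂, IsEntanglementAnnihilating C₁ C₂ P → IsEntanglementBreaking C₁ C₂ P

/-- The minimal tensor product of two cones. -/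
def minTensor {V W : Type*} [AddCommGroup V] [Module ℝ V] [AddCommGroup W] [Module ℝ W]
    (C : Set V) (D : Set W) : Set (V ⊗[ℝ] W) :=
  convexHull ℝ {z | ∃ x ∈ C, ∃ y ∈ D, z = x ⊗ₜ[ℝ] y}

/-- The maximal tensor product of two cones: the dual of the minimal tensor product of the
dual cones, under the canonical identification of `(V ⊗ W)*` with `V* ⊗ W*`. -/
def maxTensor {V W : Type*} [AddCommGroup V] [Module ℝ V] [AddCommGroup W] [Module ℝ W]
    (C : Set V) (D : Set W) : Set (V ⊗[ℝ] W) :=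
  {z | ∀ φ ∈ dualConeSet C, ∀ ψ ∈ dualConeSet D,
      0 ≤ TensorProduct.dualDistrib ℝ V W (φ ⊗ₜ[ℝ] ψ) z}

/-- The Lorentz cone `L_n ⊆ ℝ ⊕ ℝⁿ`. -/
def lorentzCone (n : ℕ) : Set (ℝ × EuclideanSpace ℝ (Fin n)) := {p | ‖p.2‖ ≤ p.1}



open PiTensorProduct in
theorem dualPairing_tprod {V : Type*} [AddCommGroup V] [Module ℝ V] {k : ℕ}
    (φ : Fin k → Module.Dual ℝ V) (x : Fin k → V) :
    dualPairing φ (PiTensorProduct.tprod ℝ x) = ∏ i, φ i (x i) := by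
  simp [dualPairing]

theorem dualPairing_map {V W : Type*} [AddCommGroup V] [Module ℝ V] [AddCommGroup W] [Module ℝ W]
    {k : ℕ} (φ : Fin k → Module.Dual ℝ W) (A : Fin k → V →ₗ[ℝ] W) (z : ⨂[ℝ] _ : Fin k, V) :
    dualPairing φ (PiTensorProduct.map A z) = dualPairing (fun i => (φ i).comp (A i)) z := by
  rw [dualPairing, ← LinearMap.comp_apply, PiTensorProduct.lift_comp_map]
  rfl

/-- weak form of annihilation -/
def WA {V₁ V₂ : Type*} [AddCommGroup V₁] [Module ℝ V₁]
    [AddCommGroup V₂] [Module ℝ V₂] (C₁ : Set V₁) (C₂ : Set V₂) (P : V₁ →ₗ[ℝ] V₂) : Prop :=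
  ∀ k : ℕ, 1 ≤ k → ∀ z ∈ maxTensorPow C₁ k, ∀ f : (⨂[ℝ] _ : Fin k, V₂) →ₗ[ℝ] ℝ,
    (∀ x : Fin k → V₂, (∀ i, x i ∈ C₂) → 0 ≤ f (PiTensorProduct.tprod ℝ x)) →
    0 ≤ f (PiTensorProduct.map (fun _ => P) z)

theorem WA_of_EA {V₁ V₂ : Type*} [AddCommGroup V₁] [Module ℝ V₁]
    [AddCommGroup V₂] [Module ℝ V₂] {C₁ : Set V₁} {C₂ : Set V₂} {P : V₁ →ₗ[ℝ] V₂}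
    (h : IsEntanglementAnnihilating C₁ C₂ P) : WA C₁ C₂ P := by
  intro k hk z hz f hf
  have h1 := h k hk hz
  have h2 : minTensorPow C₂ k ⊆ f ⁻¹' (Set.Ici 0) := by
    apply convexHull_min
    · rintro _ ⟨x, hx, rfl⟩
      exact hf x hx
    · exact (convex_Ici 0).linear_preimage f
  exact h2 h1

theorem WA_sum {U V₁ V₂ W ι : Type*} [AddCommGroup V₁] [Module ℝ V₁]
    [AddCommGroup V₂] [Module ℝ V₂] [AddCommGroup U] [Module ℝ U]
    [AddCommGroup W] [Module ℝ W] [Fintype ι]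
    {C₀ : Set U} {C₁ : Set V₁} {C₂ : Set V₂} {C₃ : Set W} {P : V₁ →ₗ[ℝ] V₂}
    (h : WA C₁ C₂ P) (A : ι → V₂ →ₗ[ℝ] W) (B : ι → U →ₗ[ℝ] V₁)
    (hA : ∀ j, ∀ x ∈ C₂, A j x ∈ C₃)
    (hB : ∀ j, ∀ x ∈ C₀, ∀ φ ∈ dualConeSet C₁, 0 ≤ φ (B j x)) :
    WA C₀ C₃ (∑ j, A j ∘ₗ P ∘ₗ B j) := by
  classical
  intro k hk z hz f hf
  have h1 : PiTensorProduct.map (fun _ : Fin k => ∑ j, A j ∘ₗ P ∘ₗ B j)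
      = ∑ r : Fin k → ι, PiTensorProduct.map (fun i => A (r i)) ∘ₗ
        PiTensorProduct.map (fun _ => P) ∘ₗ PiTensorProduct.map (fun i => B (r i)) := by
    have := (PiTensorProduct.mapMultilinear ℝ (fun _ : Fin k => U) (fun _ => W)).map_sum
      (fun _ j => A j ∘ₗ P ∘ₗ B j)
    simp only [PiTensorProduct.mapMultilinear_apply] at this
    rw [this]
    refine Finset.sum_congr rfl fun r _ => ?_
    rw [← PiTensorProduct.map_comp, ← PiTensorProduct.map_comp]
  rw [h1, LinearMap.sum_apply, map_sum]
  refine Finset.sum_nonneg fun r _ => ?_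
  have := h k hk (PiTensorProduct.map (fun i => B (r i)) z) ?_
    (f ∘ₗ PiTensorProduct.map (fun i => A (r i))) ?_
  · simpa using this
  · intro φ hφ
    rw [dualPairing_map]
    exact hz _ fun i x hx => hB _ x hx _ (hφ i)
  · intro x hx
    simp only [LinearMap.comp_apply, PiTensorProduct.map_tprod]
    exact hf _ fun i => hA _ _ (hx i)

theorem WA_comp {U V₁ V₂ W : Type*} [AddCommGroup V₁] [Module ℝ V₁]
    [AddCommGroup V₂] [Module ℝ V₂] [AddCommGroup U] [Module ℝ U]
    [AddCommGroup W] [Module ℝ W]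
    {C₀ : Set U} {C₁ : Set V₁} {C₂ : Set V₂} {C₃ : Set W} {P : V₁ →ₗ[ℝ] V₂}
    (h : WA C₁ C₂ P) (A : V₂ →ₗ[ℝ] W) (B : U →ₗ[ℝ] V₁)
    (hA : ∀ x ∈ C₂, A x ∈ C₃)
    (hB : ∀ x ∈ C₀, ∀ φ ∈ dualConeSet C₁, 0 ≤ φ (B x)) :
    WA C₀ C₃ (A ∘ₗ P ∘ₗ B) := by
  have := WA_sum (ι := Unit) h (fun _ => A) (fun _ => B) (fun _ => hA) (fun _ => hB)
  simpa using this

open Matrix in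
theorem exists_clifford (n : ℕ) : ∃ (ι : Type) (_ : Fintype ι) (_ : DecidableEq ι) (_ : Nonempty ι)
    (γ : Fin n → Matrix ι ι ℝ), (∀ i, (γ i)ᵀ = γ i) ∧
    ∀ x : Fin n → ℝ, (∑ i, x i • γ i) * (∑ i, x i • γ i) = (∑ i, x i ^ 2) • 1 := by
  induction n with
  | zero => exact ⟨Unit, inferInstance, inferInstance, inferInstance, fun i => i.elim0,
      fun i => i.elim0, fun x => by simp⟩
  | succ n ih =>
    obtain ⟨ι, _, _, _, γ, h1, h2⟩ := ih
    refine ⟨ι ⊕ ι, inferInstance, inferInstance, inferInstance,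
      Fin.cons (fromBlocks 0 1 1 0) (fun i => fromBlocks (γ i) 0 0 (-(γ i))), ?_, ?_⟩
    · intro i
      refine Fin.cases ?_ (fun i => ?_) i
      · simp [fromBlocks_transpose]
      · simp [fromBlocks_transpose, h1]
    · intro x
      have hs : ∑ i : Fin n, x i.succ • fromBlocks (γ i) 0 0 (-(γ i))
          = fromBlocks (∑ i : Fin n, x i.succ • γ i) 0 0 (-(∑ i : Fin n, x i.succ • γ i)) := by
        ext a b
        rcases a with a | a <;> rcases b with b | b <;>
          simp [Matrix.sum_apply, fromBlocks]
      rw [Fin.sum_univ_succ, Fin.sum_univ_succ]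
      simp only [Fin.cons_zero, Fin.cons_succ]
      rw [hs]
      have h3 := h2 (fun i => x i.succ)
      rw [fromBlocks_smul, fromBlocks_add, fromBlocks_multiply]
      simp only [smul_zero, zero_add, add_zero, neg_mul, mul_neg, neg_neg, h3]
      simp only [mul_one, smul_mul_assoc, mul_smul_comm, one_mul]
      rw [← fromBlocks_one, fromBlocks_smul]
      congr 1
      · rw [add_smul, smul_smul, sq, add_comm]
      · simp
      · simp
      · rw [add_smul, smul_smul, sq]

open Matrix in
theorem word_ortho {ι : Type} [Fintype ι] [DecidableEq ι] {k : ℕ} (M : Fin k → Matrix ι ι ℝ)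
    (c : Fin k → ℝ) (h : ∀ i, (M i)ᵀ * M i = c i • 1) :
    ((List.ofFn M).prod)ᵀ * (List.ofFn M).prod = (∏ i, c i) • 1 := by
  induction k with
  | zero => simp
  | succ k ih =>
    rw [List.ofFn_succ, List.prod_cons, transpose_mul, Fin.prod_univ_succ]
    have := ih (fun i => M i.succ) (fun i => c i.succ) (fun i => h _)
    rw [Matrix.mul_assoc, ← Matrix.mul_assoc _ (M 0), h 0, smul_mul_assoc, one_mul, mul_smul_comm,
      this, smul_smul]

open Matrix in
theorem entry_sq_le {ι : Type} [Fintype ι] [DecidableEq ι] (X : Matrix ι ι ℝ) (c : ℝ)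
    (h : Xᵀ * X = c • 1) (p q : ι) : X p q ^ 2 ≤ c := by
  have h1 : (Xᵀ * X) q q = c := by rw [h]; simp
  rw [Matrix.mul_apply] at h1
  rw [← h1]
  have := Finset.single_le_sum (f := fun j => Xᵀ q j * X j q)
    (fun j _ => by simp only [transpose_apply]; exact mul_self_nonneg _) (Finset.mem_univ p)
  simpa [sq] using this

open Matrix in
theorem entry_sq_sum {ι : Type} [Fintype ι] [DecidableEq ι] (X : Matrix ι ι ℝ)
    (h : Xᵀ * X = 1) : ∑ p, ∑ q, X p q ^ 2 = Fintype.card ι := by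
  have h1 : (Xᵀ * X).trace = Fintype.card ι := by rw [h]; simp
  rw [← h1, Matrix.trace, Finset.sum_comm]
  simp [Matrix.mul_apply, sq]

/-- word coefficient -/
def wordC {n : ℕ} {ι : Type} [Fintype ι] [DecidableEq ι] (γ : Fin n → Matrix ι ι ℝ) {k : ℕ}
    (w : Fin k → Fin n) : Matrix ι ι ℝ := (List.ofFn fun i => γ (w i)).prod

open Matrix in
theorem word_bound {n : ℕ} {ι : Type} [Fintype ι] [DecidableEq ι] (γ : Fin n → Matrix ι ι ℝ)
    (h1 : ∀ i, (γ i)ᵀ = γ i)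
    (h2 : ∀ x : Fin n → ℝ, (∑ i, x i • γ i) * (∑ i, x i • γ i) = (∑ i, x i ^ 2) • 1)
    {k : ℕ} (y : Fin k → Fin n → ℝ) (s : Fin k → ℝ) (hs : ∀ i, 0 ≤ s i)
    (hy : ∀ i, ∑ j, y i j ^ 2 ≤ s i ^ 2) (p q : ι) :
    |∑ w : Fin k → Fin n, wordC γ w p q * ∏ i, y i (w i)| ≤ ∏ i, s i := by
  have e : (List.ofFn fun i => ∑ j, y i j • γ j).prod
      = ∑ w : Fin k → Fin n, (∏ i, y i (w i)) • wordC γ w := by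
    have := (MultilinearMap.mkPiAlgebraFin ℝ k (Matrix ι ι ℝ)).map_sum (fun i j => y i j • γ j)
    rw [MultilinearMap.mkPiAlgebraFin_apply] at this
    rw [this]
    refine Finset.sum_congr rfl fun w _ => ?_
    rw [MultilinearMap.map_smul_univ, MultilinearMap.mkPiAlgebraFin_apply]
    rfl
  have e2 : ∑ w : Fin k → Fin n, wordC γ w p q * ∏ i, y i (w i)
      = (List.ofFn fun i => ∑ j, y i j • γ j).prod p q := by
    rw [e, Matrix.sum_apply]
    simp [mul_comm]
  rw [e2]
  apply abs_le_of_sq_le_sq _ (Finset.prod_nonneg fun i _ => hs i)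
  refine (entry_sq_le _ _ (word_ortho _ (fun i => ∑ j, y i j ^ 2) fun i => ?_) p q).trans ?_
  · rw [← h2]
    congr 1
    simp [transpose_sum, h1]
  · rw [← Finset.prod_pow]
    exact Finset.prod_le_prod (fun i _ => Finset.sum_nonneg fun j _ => sq_nonneg _) fun i _ => hy i

open Matrix in
theorem word_sum {n : ℕ} {ι : Type} [Fintype ι] [DecidableEq ι] (γ : Fin n → Matrix ι ι ℝ)
    (h1 : ∀ i, (γ i)ᵀ = γ i)
    (h2 : ∀ x : Fin n → ℝ, (∑ i, x i • γ i) * (∑ i, x i • γ i) = (∑ i, x i ^ 2) • 1)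
    {k : ℕ} (w : Fin k → Fin n) : ∑ p, ∑ q, wordC γ w p q ^ 2 = Fintype.card ι := by
  apply entry_sq_sum
  have h3 : ∀ i, (γ i)ᵀ * γ i = (1 : ℝ) • 1 := by
    intro i
    have := h2 (Pi.single i 1)
    simp only [Pi.single_apply, ite_smul, one_smul, zero_smul, Finset.sum_ite_eq',
      Finset.mem_univ, if_true, ite_pow] at this
    rw [h1, this]
    simp
  have := word_ortho (fun i => γ (w i)) (fun _ => 1) (fun i => h3 _)
  simpa [wordC] using this

/-- time vector -/
def e0 (n : ℕ) : ℝ × EuclideanSpace ℝ (Fin n) := (1, 0)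
/-- space vector -/
def ee {n : ℕ} (j : Fin n) : ℝ × EuclideanSpace ℝ (Fin n) := (0, EuclideanSpace.single j 1)
/-- time coordinate -/
def c0 (n : ℕ) : Module.Dual ℝ (ℝ × EuclideanSpace ℝ (Fin n)) := LinearMap.fst ℝ _ _
/-- space coordinate -/
def cc {n : ℕ} (j : Fin n) : Module.Dual ℝ (ℝ × EuclideanSpace ℝ (Fin n)) :=
  (EuclideanSpace.proj j : EuclideanSpace ℝ (Fin n) →L[ℝ] ℝ).toLinearMap ∘ₗ LinearMap.snd ℝ _ _

@[simp] theorem c0_apply {n : ℕ} (v : ℝ × EuclideanSpace ℝ (Fin n)) : c0 n v = v.1 := rfl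
@[simp] theorem cc_apply {n : ℕ} (j : Fin n) (v : ℝ × EuclideanSpace ℝ (Fin n)) :
    cc j v = v.2 j := rfl

theorem decomp {n : ℕ} (v : ℝ × EuclideanSpace ℝ (Fin n)) :
    v = v.1 • e0 n + ∑ j, v.2 j • ee j := by
  refine Prod.ext ?_ ?_
  · simp [e0, ee, Prod.fst_sum]
  · ext i
    simp [e0, ee, Prod.snd_sum, Pi.single_apply]

theorem dual_lorentz {n : ℕ} {φ : Module.Dual ℝ (ℝ × EuclideanSpace ℝ (Fin n))}
    (h : φ ∈ dualConeSet (lorentzCone n)) :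
    0 ≤ φ (e0 n) ∧ ∑ j, φ (ee j) ^ 2 ≤ φ (e0 n) ^ 2 := by
  have h0 : 0 ≤ φ (e0 n) := h _ (by simp [lorentzCone, e0])
  refine ⟨h0, ?_⟩
  set r := ‖(WithLp.toLp 2 (fun j => φ (ee j)) : EuclideanSpace ℝ (Fin n))‖ with hr
  have hr2 : r ^ 2 = ∑ j, φ (ee j) ^ 2 := by
    rw [hr, EuclideanSpace.norm_sq_eq]
    simp
  have h1 := h (r, -(WithLp.toLp 2 (fun j => φ (ee j)) : EuclideanSpace ℝ (Fin n)))
    (by simp [lorentzCone, hr])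
  rw [decomp (r, -(WithLp.toLp 2 (fun j => φ (ee j)) : EuclideanSpace ℝ (Fin n)))] at h1
  have h2 : 0 ≤ r * φ (e0 n) - ∑ j, φ (ee j) ^ 2 := by
    convert h1 using 1
    simp [sq, sub_eq_add_neg]
  rw [← hr2] at h2 ⊢
  have hr0 : 0 ≤ r := norm_nonneg _
  rcases hr0.eq_or_lt with h3 | h3
  · rw [← h3]; nlinarith
  · have : r ≤ φ (e0 n) := by nlinarith
    gcongr

theorem mem_lorentz_of_dual {n : ℕ} (v : ℝ × EuclideanSpace ℝ (Fin n))
    (h : ∀ φ ∈ dualConeSet (lorentzCone n), 0 ≤ φ v) : v ∈ lorentzCone n := by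
  have h0 : 0 ≤ v.1 := h (c0 n) (fun x hx => (norm_nonneg _).trans hx)
  have h1 := h (‖v.2‖ • c0 n - (innerₛₗ ℝ v.2) ∘ₗ LinearMap.snd ℝ _ _) (by
    intro x hx
    have hx' : ‖x.2‖ ≤ x.1 := hx
    have := real_inner_le_norm v.2 x.2
    have h3 := mul_le_mul_of_nonneg_left hx' (norm_nonneg v.2)
    simp
    linarith)
  simp at h1
  show ‖v.2‖ ≤ v.1
  rcases (norm_nonneg v.2).eq_or_lt with h3 | h3
  · rw [← h3]; exact h0
  · nlinarith

theorem lorentz_diag {n : ℕ} (Q : (ℝ × EuclideanSpace ℝ (Fin n)) →ₗ[ℝ] ℝ × EuclideanSpace ℝ (Fin n))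
    (hQ : WA (lorentzCone n) (lorentzCone n) Q) (a : ℝ) (b : Fin n → ℝ)
    (ha : Q (e0 n) = a • e0 n) (hb : ∀ j, Q (ee j) = b j • ee j) : 0 ≤ a + ∑ j, b j := by
  have ha0 : 0 ≤ a := by
    have := hQ 1 le_rfl (PiTensorProduct.tprod ℝ fun _ => e0 n) (by
      intro φ hφ
      rw [dualPairing_tprod]
      exact Finset.prod_nonneg fun i _ => (dual_lorentz (hφ i)).1) (dualPairing fun _ => c0 n) (by
      intro x hx
      rw [dualPairing_tprod]
      exact Finset.prod_nonneg fun i _ => (norm_nonneg _).trans (hx i))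
    rw [PiTensorProduct.map_tprod, dualPairing_tprod] at this
    simp only [ha] at this
    simpa [e0] using this
  by_contra! hneg
  obtain ⟨ι, _, _, _, γ, h1, h2⟩ := exists_clifford n
  have key : ∀ k : ℕ, 1 ≤ k → 0 ≤ (Fintype.card ι : ℝ) ^ 2 * a ^ k
      - Fintype.card ι * (∑ j, b j) ^ k := by
    intro k hk
    have hpq : ∀ p q : ι, 0 ≤ a ^ k - ∑ w : Fin k → Fin n, wordC γ w p q ^ 2 * ∏ i, b (w i) := by
      intro p q
      have := hQ k hk (PiTensorProduct.tprod ℝ (fun _ => e0 n) -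
          ∑ w : Fin k → Fin n, wordC γ w p q • PiTensorProduct.tprod ℝ (fun i => ee (w i))) ?_
        (dualPairing (fun _ => c0 n) +
          ∑ w : Fin k → Fin n, wordC γ w p q • dualPairing (fun i => cc (w i))) ?_
      · have hz : ∀ w : Fin k → Fin n, ∏ i : Fin k, a * (cc (w i)) (e0 n) = 0 := fun w =>
          Finset.prod_eq_zero (Finset.mem_univ ⟨0, hk⟩) (by simp [e0])
        have hz2 : ∀ w : Fin k → Fin n, ∏ i : Fin k, b (w i) * c0 n (ee (w i)) = 0 := fun w =>
          Finset.prod_eq_zero (Finset.mem_univ ⟨0, hk⟩) (by simp [ee])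
        have hz3 : ∀ w w' : Fin k → Fin n, ∏ i : Fin k, b (w i) * cc (w' i) (ee (w i))
            = if w' = w then ∏ i, b (w i) else 0 := by
          intro w w'
          split_ifs with hw
          · subst hw; simp [ee]
          · obtain ⟨i, hi⟩ := Function.ne_iff.1 hw
            exact Finset.prod_eq_zero (Finset.mem_univ i) (by simp [ee, hi])
        simp only [map_sub, map_sum, map_smul, PiTensorProduct.map_tprod, ha, hb,
          LinearMap.add_apply, LinearMap.sum_apply, LinearMap.smul_apply, dualPairing_tprod,
          hz, hz2, hz3, smul_eq_mul, mul_zero, Finset.sum_const_zero, mul_ite, zero_add, add_zero,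
          Finset.sum_ite_eq', Finset.sum_ite_eq, Finset.mem_univ, if_true] at this
        convert this using 2
        · simp [e0]
        · refine Finset.sum_congr rfl fun w _ => ?_
          ring
      · intro φ hφ
        have hd := fun i => dual_lorentz (hφ i)
        have := word_bound γ h1 h2 (fun i j => φ i (ee j)) (fun i => φ i (e0 n))
          (fun i => (hd i).1) (fun i => (hd i).2) p q
        simp only [map_sub, map_sum, map_smul, dualPairing_tprod, smul_eq_mul]
        linarith [(abs_le.1 this).2]
      · intro x hx
        have := word_bound γ h1 h2 (fun i j => (x i).2 j) (fun i => (x i).1)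
          (fun i => (norm_nonneg _).trans (hx i)) (fun i => by
            have h3 : ‖(x i).2‖ ≤ (x i).1 := hx i
            have h4 := EuclideanSpace.norm_sq_eq (x i).2
            simp only [Real.norm_eq_abs, sq_abs] at h4
            rw [← h4]
            gcongr) p q
        simp only [LinearMap.add_apply, LinearMap.sum_apply, LinearMap.smul_apply,
          dualPairing_tprod, smul_eq_mul, c0_apply, cc_apply]
        linarith [(abs_le.1 this).1]
    have hsum := Finset.sum_nonneg fun p (_ : p ∈ Finset.univ) =>
      Finset.sum_nonneg fun q (_ : q ∈ Finset.univ) => hpq p q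
    refine hsum.trans_eq (Eq.symm ?_)
    have hc : ∑ _p : ι, ∑ _q : ι, a ^ k = (Fintype.card ι : ℝ) ^ 2 * a ^ k := by
      simp; ring
    rw [← hc]
    simp only [Finset.sum_sub_distrib]
    congr 1
    · have : ∀ p : ι, ∑ q, ∑ w : Fin k → Fin n, wordC γ w p q ^ 2 * ∏ i, b (w i)
          = ∑ w : Fin k → Fin n, ∑ q, wordC γ w p q ^ 2 * ∏ i, b (w i) :=
        fun p => Finset.sum_comm
      simp only [this]
      rw [Finset.sum_comm, Fintype.sum_pow, Finset.mul_sum]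
      refine Finset.sum_congr rfl fun w _ => ?_
      rw [← word_sum γ h1 h2 w]
      simp only [Finset.sum_mul]
  set B := -∑ j, b j with hB
  have hBa : a < B := by linarith
  have hB0 : 0 < B := by linarith
  have hN : (0 : ℝ) < Fintype.card ι := by exact_mod_cast Fintype.card_pos
  have hlim : ∃ k : ℕ, ((a / B) ^ 2) ^ k < 1 / Fintype.card ι :=
    exists_pow_lt_of_lt_one (by positivity) (by
      have : a / B < 1 := (div_lt_one hB0).2 hBa
      have h0 : 0 ≤ a / B := by positivity
      nlinarith)
  obtain ⟨k, hk⟩ := hlim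
  have hk' : ((a / B) ^ 2) ^ (k + 1) < 1 / Fintype.card ι := by
    refine lt_of_le_of_lt ?_ hk
    apply pow_le_pow_of_le_one (by positivity) _ (Nat.le_succ k)
    have : a / B < 1 := (div_lt_one hB0).2 hBa
    have h0 : 0 ≤ a / B := by positivity
    nlinarith
  have h3 := key (2 * (k + 1)) (by omega)
  have h4 : (∑ j, b j) ^ (2 * (k + 1)) = B ^ (2 * (k + 1)) := by
    rw [hB, Even.neg_pow (even_two_mul _)]
  rw [h4] at h3
  rw [← pow_mul, div_pow, div_lt_div_iff₀ (by positivity) hN] at hk'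
  nlinarith

/-- reflection of one coordinate -/
def refl1 {n : ℕ} (i : Fin n) :
    (ℝ × EuclideanSpace ℝ (Fin n)) →ₗ[ℝ] ℝ × EuclideanSpace ℝ (Fin n) where
  toFun v := (v.1, WithLp.toLp 2 fun j => if j = i then - v.2 j else v.2 j)
  map_add' u v := by
    refine Prod.ext (by simp) ?_
    ext j
    by_cases h : j = i <;> simp [h, add_comm]
  map_smul' c v := by
    refine Prod.ext (by simp) ?_
    ext j
    by_cases h : j = i <;> simp [h]

theorem refl1_fst {n : ℕ} (i : Fin n) (v) : (refl1 i v).1 = v.1 := rfl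
theorem refl1_snd {n : ℕ} (i j : Fin n) (v) :
    (refl1 i v).2 j = if j = i then - v.2 j else v.2 j := rfl

theorem refl1_refl1 {n : ℕ} (i : Fin n) (v) : refl1 i (refl1 i v) = v := by
  refine Prod.ext rfl ?_
  ext j
  simp only [refl1_snd]
  split_ifs <;> simp

theorem refl1_comm {n : ℕ} (i j : Fin n) (v) : refl1 i (refl1 j v) = refl1 j (refl1 i v) := by
  refine Prod.ext rfl ?_
  ext l
  simp only [refl1_snd]
  split_ifs <;> simp

theorem refl1_mem {n : ℕ} (i : Fin n) (v) (hv : v ∈ lorentzCone n) :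
    refl1 i v ∈ lorentzCone n := by
  have : ‖(refl1 i v).2‖ = ‖v.2‖ := by
    rw [EuclideanSpace.norm_eq, EuclideanSpace.norm_eq]
    congr 1
    refine Finset.sum_congr rfl fun j _ => ?_
    rw [refl1_snd]
    split_ifs <;> simp
  show ‖(refl1 i v).2‖ ≤ v.1
  rw [this]
  exact hv

theorem lorentz_twirl {n : ℕ}
    (P : (ℝ × EuclideanSpace ℝ (Fin n)) →ₗ[ℝ] ℝ × EuclideanSpace ℝ (Fin n))
    (hP : WA (lorentzCone n) (lorentzCone n) P) (ht : LinearMap.trace ℝ _ P < 0)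
    (S : Finset (Fin n)) :
    ∃ Q : (ℝ × EuclideanSpace ℝ (Fin n)) →ₗ[ℝ] ℝ × EuclideanSpace ℝ (Fin n),
      WA (lorentzCone n) (lorentzCone n) Q ∧ LinearMap.trace ℝ _ Q < 0 ∧
      ∀ i ∈ S, ∀ v, refl1 i (Q v) = Q (refl1 i v) := by
  induction S using Finset.induction_on with
  | empty => exact ⟨P, hP, ht, by simp⟩
  | insert i S hi ih =>
    obtain ⟨Q, h1, h2, h3⟩ := ih
    let R : Bool → (ℝ × EuclideanSpace ℝ (Fin n)) →ₗ[ℝ] ℝ × EuclideanSpace ℝ (Fin n) :=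
      fun b => if b then refl1 i else LinearMap.id
    have hR : ∀ b, ∀ x ∈ lorentzCone n, R b x ∈ lorentzCone n := by
      intro b x hx
      cases b
      · simpa [R] using hx
      · simpa [R] using refl1_mem i x hx
    have hW := WA_sum h1 R R hR (fun b x hx φ hφ => hφ _ (hR b x hx))
    have hs : ∑ b, R b ∘ₗ Q ∘ₗ R b = refl1 i ∘ₗ Q ∘ₗ refl1 i + Q := by
      simp [R]
    rw [hs] at hW
    refine ⟨_, hW, ?_, ?_⟩
    · rw [map_add, LinearMap.trace_comp_comm', LinearMap.comp_assoc]
      have : refl1 i ∘ₗ refl1 i = LinearMap.id := LinearMap.ext (refl1_refl1 i)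
      rw [this, LinearMap.comp_id]
      linarith
    · intro j hj v
      simp only [LinearMap.add_apply, LinearMap.comp_apply, map_add]
      rcases Finset.mem_insert.1 hj with rfl | hj
      · rw [refl1_refl1, refl1_refl1, add_comm]
      · rw [refl1_comm, h3 j hj, h3 j hj, refl1_comm j i]

theorem lorentz_trace {n : ℕ}
    (P : (ℝ × EuclideanSpace ℝ (Fin n)) →ₗ[ℝ] ℝ × EuclideanSpace ℝ (Fin n))
    (hP : WA (lorentzCone n) (lorentzCone n) P) : 0 ≤ LinearMap.trace ℝ _ P := by
  by_contra! ht
  obtain ⟨Q, h1, h2, h3⟩ := lorentz_twirl P hP ht Finset.univ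
  have ha : Q (e0 n) = (Q (e0 n)).1 • e0 n := by
    refine Prod.ext (by simp [e0]) ?_
    ext i
    have h4 := h3 i (Finset.mem_univ _) (e0 n)
    have h5 : refl1 i (e0 n) = e0 n := by
      refine Prod.ext rfl ?_
      ext j
      rw [refl1_snd]
      simp [e0]
    rw [h5] at h4
    have h6 := congrArg (fun v => v.2 i) h4
    simp only [refl1_snd, if_true] at h6
    have : (Q (e0 n)).2 i = 0 := by linarith
    rw [this]
    simp [e0]
  have hb : ∀ j, Q (ee j) = (Q (ee j)).2 j • ee j := by
    intro j
    have h4 := h3 j (Finset.mem_univ _) (ee j)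
    have h5 : refl1 j (ee j) = - ee j := by
      refine Prod.ext (by simp [ee, refl1_fst]) ?_
      ext l
      rw [refl1_snd]
      by_cases h : l = j <;> simp [ee, h]
    rw [h5, map_neg] at h4
    refine Prod.ext ?_ ?_
    · have h6 := congrArg (fun v => v.1) h4
      simp only [refl1_fst, Prod.fst_neg] at h6
      have : (Q (ee j)).1 = 0 := by linarith
      rw [this]
      simp [ee]
    · ext l
      by_cases h : l = j
      · subst h; simp [ee]
      · have h6 := congrArg (fun v => v.2 l) h4
        simp only [refl1_snd, if_neg h, Prod.snd_neg, PiLp.neg_apply] at h6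
        have : (Q (ee j)).2 l = 0 := by linarith
        rw [this]
        simp [ee, h]
  have h7 := lorentz_diag Q h1 _ _ ha hb
  have h8 : LinearMap.trace ℝ _ Q = (Q (e0 n)).1 + ∑ j, (Q (ee j)).2 j := by
    rw [LinearMap.trace_eq_matrix_trace ℝ ((Module.Basis.singleton Unit ℝ).prod
      (EuclideanSpace.basisFun (Fin n) ℝ).toBasis), Matrix.trace, Fintype.sum_sum_type]
    simp [LinearMap.toMatrix_apply, e0, ee]
  linarith

theorem isCompact_hull {E : Type*} [NormedAddCommGroup E] [NormedSpace ℝ E]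
    [FiniteDimensional ℝ E] {K : Set E} (hK : IsCompact K) : IsCompact (convexHull ℝ K) := by
  rcases K.eq_empty_or_nonempty with rfl | ⟨k0, hk0⟩
  · simp
  set N := Module.finrank ℝ E + 1 with hN
  have hc : IsCompact ((fun p : (Fin N → ℝ) × (Fin N → E) => ∑ i, p.1 i • p.2 i) ''
      ((stdSimplex ℝ (Fin N)) ×ˢ (Set.pi Set.univ fun _ => K))) := by
    apply IsCompact.image
    · exact (isCompact_stdSimplex ℝ (Fin N)).prod (isCompact_univ_pi fun _ => hK)
    · fun_prop
  convert hc using 1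
  apply Set.Subset.antisymm
  · intro x hx
    obtain ⟨ι, _, z, w, hz, hi, hw, hw1, hx⟩ := eq_pos_convex_span_of_mem_convexHull hx
    have hcard : Fintype.card ι ≤ Fintype.card (Fin N) := by
      rw [Fintype.card_fin]
      exact hi.card_le_finrank_succ.trans (by
        have := Submodule.finrank_le (vectorSpan ℝ (Set.range z))
        omega)
    obtain ⟨e⟩ := Function.Embedding.nonempty_of_card_le hcard
    have hwe : ∀ i, Function.extend e w 0 (e i) = w i := fun i => e.injective.extend_apply _ _ _
    have hze : ∀ i, Function.extend e z (fun _ => k0) (e i) = z i :=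
      fun i => e.injective.extend_apply _ _ _
    have hw0 : ∀ j, j ∉ Set.range e → Function.extend e w 0 j = 0 := fun j hj =>
      Function.extend_apply' _ _ _ (by simpa using hj)
    have hz0 : ∀ j, j ∉ Set.range e → Function.extend e z (fun _ => k0) j = k0 := fun j hj =>
      Function.extend_apply' _ _ _ (by simpa using hj)
    refine ⟨(Function.extend e w 0, Function.extend e z (fun _ => k0)), ⟨⟨?_, ?_⟩, ?_⟩, ?_⟩
    · intro j
      by_cases hj : j ∈ Set.range e
      · obtain ⟨i, rfl⟩ := hj
        exact (hw i).le.trans_eq (hwe i).symm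
      · exact (hw0 j hj).ge
    · rw [← hw1]
      exact (Fintype.sum_of_injective e e.injective _ _ hw0 (fun i => (hwe i).symm)).symm
    · intro j _
      by_cases hj : j ∈ Set.range e
      · obtain ⟨i, rfl⟩ := hj
        simp only [hze]; exact hz ⟨i, rfl⟩
      · simp only [hz0 j hj]; exact hk0
    · rw [← hx]
      refine (Fintype.sum_of_injective e e.injective _ _ (fun j hj => ?_) (fun i => ?_)).symm
      · simp [hw0 j hj]
      · simp only [hwe, hze]
  · rintro _ ⟨⟨w, z⟩, ⟨⟨hw, hw1⟩, hz⟩, rfl⟩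
    exact (convex_convexHull ℝ K).sum_mem (fun i _ => hw i) hw1
      (fun i _ => subset_convexHull ℝ K (hz i trivial))

section proper
variable {V : Type*} [NormedAddCommGroup V] [NormedSpace ℝ V] [FiniteDimensional ℝ V]
  {C : Set V}

theorem IsProperCone.zero_mem (hC : IsProperCone C) : (0 : V) ∈ C := by
  have : (0 : V) ∈ C ∩ (-C) := by rw [hC.2.2.2.2]; rfl
  exact this.1

theorem IsProperCone.exists_psi (hC : IsProperCone C) :
    ∃ (ψ : V →L[ℝ] ℝ) (c : ℝ), 0 < c ∧ ∀ x ∈ C, c * ‖x‖ ≤ ψ x := by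
  have h0 := hC.zero_mem
  obtain ⟨hcl, hconv, hcone, -, hpt⟩ := hC
  have hS : IsCompact (C ∩ Metric.sphere 0 1) := (isCompact_sphere 0 1).inter_left hcl
  have hcone' : ∀ c : ℝ, 0 ≤ c → ∀ x ∈ C, c • x ∈ C := by
    intro c hc x hx
    rcases hc.eq_or_lt with rfl | hc
    · simpa using h0
    · exact hcone hc hx
  have hconv2 : Convex ℝ (C \ {0}) := by
    rintro x ⟨hx, hx0⟩ y ⟨hy, hy0⟩ a b ha hb hab
    refine ⟨hconv hx hy ha hb hab, fun h => ?_⟩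
    have h : a • x + b • y = 0 := h
    have h1 : a • x ∈ C ∩ (-C) := ⟨hcone' a ha x hx, by
      rw [Set.mem_neg, neg_eq_of_add_eq_zero_right h]
      exact hcone' b hb y hy⟩
    rw [hpt] at h1
    have h1 : a • x = 0 := h1
    rw [h1, zero_add] at h
    rcases smul_eq_zero.1 h1 with h2 | h2
    · rcases smul_eq_zero.1 h with h3 | h3
      · linarith
      · exact hy0 h3
    · exact hx0 h2
  have hsub : convexHull ℝ (C ∩ Metric.sphere 0 1) ⊆ C \ {0} := by
    apply convexHull_min _ hconv2
    rintro x ⟨hx, hx1⟩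
    refine ⟨hx, ?_⟩
    rintro rfl
    simp at hx1
  obtain ⟨f, u, hu, hf⟩ := geometric_hahn_banach_point_closed (x := (0 : V))
    (convex_convexHull ℝ (C ∩ Metric.sphere 0 1)) (isCompact_hull hS).isClosed
    (fun h => (hsub h).2 rfl)
  rw [map_zero] at hu
  refine ⟨f, u, hu, fun x hx => ?_⟩
  rcases eq_or_ne x 0 with rfl | hx0
  · simp
  · have hn : 0 < ‖x‖ := norm_pos_iff.2 hx0
    have := hf (‖x‖⁻¹ • x) (subset_convexHull ℝ _ ⟨hcone (by positivity) hx, by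
      simp [norm_smul, hn.ne']⟩)
    rw [map_smul, smul_eq_mul, inv_mul_eq_div, lt_div_iff₀ hn] at this
    exact this.le

theorem IsProperCone.exists_u (hC : IsProperCone C) :
    ∃ u ∈ C, ∃ M : ℝ, 0 < M ∧ ∀ φ ∈ dualConeSet C, ∀ v, |φ v| ≤ M * ‖v‖ * φ u := by
  have h0 := hC.zero_mem
  obtain ⟨hcl, hconv, hcone, hgen, hpt⟩ := hC
  have hint : (interior C).Nonempty := by
    rw [hconv.interior_nonempty_iff_affineSpan_eq_top]
    have h1 := affineSpan_insert_zero (k := ℝ) C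
    rw [Set.insert_eq_of_mem h0] at h1
    apply SetLike.coe_injective
    rw [h1]
    refine Set.eq_univ_of_forall fun v => ?_
    obtain ⟨x, hx, y, hy, rfl⟩ := hgen v
    exact Submodule.sub_mem _ (Submodule.subset_span hx) (Submodule.subset_span hy)
  obtain ⟨u, hu⟩ := hint
  obtain ⟨r, hr, hball⟩ := Metric.isOpen_iff.1 isOpen_interior u hu
  refine ⟨u, interior_subset hu, 2 / r, by positivity, fun φ hφ v => ?_⟩
  have hb : ∀ w : V, ‖w‖ < r → 0 ≤ φ (u + w) := fun w hw =>
    hφ _ (interior_subset (hball (by simpa using hw)))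
  rcases eq_or_ne v 0 with rfl | hv
  · simp
  have hn : 0 < ‖v‖ := norm_pos_iff.2 hv
  have hw : ‖(r / (2 * ‖v‖)) • v‖ < r := by
    rw [norm_smul, Real.norm_of_nonneg (by positivity)]
    field_simp
    linarith
  have h1 := hb _ hw
  have h2 := hb (-((r / (2 * ‖v‖)) • v)) (by rwa [norm_neg])
  rw [map_add, map_smul, smul_eq_mul] at h1
  rw [map_add, map_neg, map_smul, smul_eq_mul] at h2
  have h3 : |r / (2 * ‖v‖) * φ v| ≤ φ u := abs_le.2 ⟨by linarith, by linarith⟩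
  rw [abs_mul, abs_of_pos (by positivity)] at h3
  calc |φ v| = (2 / r * ‖v‖) * (r / (2 * ‖v‖) * |φ v|) := by field_simp
    _ ≤ _ := by gcongr

end proper

section EB
variable {V₁ V₂ : Type*} [AddCommGroup V₁] [Module ℝ V₁]
    [AddCommGroup V₂] [Module ℝ V₂] {C₁ : Set V₁} {C₂ : Set V₂}

theorem EB_add {P Q : V₁ →ₗ[ℝ] V₂} (hP : IsEntanglementBreaking C₁ C₂ P)
    (hQ : IsEntanglementBreaking C₁ C₂ Q) : IsEntanglementBreaking C₁ C₂ (P + Q) := by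
  obtain ⟨m, φ, x, h1, h2, h3⟩ := hP
  obtain ⟨m', φ', x', h1', h2', h3'⟩ := hQ
  refine ⟨m + m', Fin.append φ φ', Fin.append x x', fun i => ?_, fun i => ?_, fun v => ?_⟩
  · refine Fin.addCases (fun i => ?_) (fun i => ?_) i
    · simpa using h1 i
    · simpa using h1' i
  · refine Fin.addCases (fun i => ?_) (fun i => ?_) i
    · simpa using h2 i
    · simpa using h2' i
  · simp [Fin.sum_univ_add, h3, h3']

theorem EB_smul {P : V₁ →ₗ[ℝ] V₂} (hP : IsEntanglementBreaking C₁ C₂ P) {c : ℝ} (hc : 0 ≤ c) :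
    IsEntanglementBreaking C₁ C₂ (c • P) := by
  obtain ⟨m, φ, x, h1, h2, h3⟩ := hP
  refine ⟨m, fun i => c • φ i, x, fun i y hy => ?_, h2, fun v => ?_⟩
  · exact mul_nonneg hc (h1 i y hy)
  · simp [h3, Finset.smul_sum, mul_smul]

end EB

theorem exists_witness {V₁ V₂ : Type*} [NormedAddCommGroup V₁] [NormedSpace ℝ V₁]
    [FiniteDimensional ℝ V₁] [NormedAddCommGroup V₂] [NormedSpace ℝ V₂] [FiniteDimensional ℝ V₂]
    {C₁ : Set V₁} {C₂ : Set V₂} (hC₁ : IsProperCone C₁) (hC₂ : IsProperCone C₂)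
    (P : V₁ →ₗ[ℝ] V₂) (hP : ∀ x ∈ C₁, P x ∈ C₂) (hEB : ¬ IsEntanglementBreaking C₁ C₂ P) :
    ∃ Q : V₂ →ₗ[ℝ] V₁, (∀ x ∈ C₂, ∀ φ ∈ dualConeSet C₁, 0 ≤ φ (Q x)) ∧
      LinearMap.trace ℝ _ (Q ∘ₗ P) < 0 := by
  obtain ⟨u, huC, M, hM, hu⟩ := hC₁.exists_u
  obtain ⟨ψ, c, hc, hψ⟩ := hC₂.exists_psi
  have hψ0 : ∀ x ∈ C₂, 0 ≤ ψ x := fun x hx => le_trans (by positivity) (hψ x hx)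
  have hpos : 0 < ψ (P u) := by
    refine lt_of_le_of_ne (hψ0 _ (hP _ huC)) fun h => hEB ?_
    have hφ : (ψ.toLinearMap ∘ₗ P) ∈ dualConeSet C₁ := fun x hx => hψ0 _ (hP _ hx)
    have h1 : ∀ x ∈ C₁, P x = 0 := by
      intro x hx
      have h2 := hu _ hφ x
      have h3 : (ψ.toLinearMap ∘ₗ P) u = 0 := h.symm
      rw [h3, mul_zero] at h2
      have h4 : ψ (P x) ≤ 0 := (le_abs_self _).trans h2
      have h5 := hψ _ (hP _ hx)
      have : ‖P x‖ = 0 := by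
        have := norm_nonneg (P x)
        nlinarith
      exact norm_eq_zero.1 this
    refine ⟨0, fun i => i.elim0, fun i => i.elim0, fun i => i.elim0, fun i => i.elim0, fun v => ?_⟩
    obtain ⟨x, hx, y, hy, rfl⟩ := hC₁.2.2.2.1 v
    simp [h1 x hx, h1 y hy]
  let D : Set (V₁ →L[ℝ] ℝ) := {φ | (∀ x ∈ C₁, 0 ≤ φ x) ∧ φ u = 1}
  have hD : IsCompact D := by
    apply Metric.isCompact_of_isClosed_isBounded
    · have : D = (⋂ x ∈ C₁, {φ : V₁ →L[ℝ] ℝ | 0 ≤ φ x}) ∩ {φ | φ u = 1} := by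
        ext φ; simp [D]
      rw [this]
      apply IsClosed.inter
      · refine isClosed_biInter fun x _ => isClosed_le continuous_const (by fun_prop)
      · exact isClosed_eq (by fun_prop) continuous_const
    · refine isBounded_iff_forall_norm_le.2 ⟨M, fun φ hφ => ?_⟩
      refine φ.opNorm_le_bound hM.le fun v => ?_
      have := hu φ.toLinearMap hφ.1 v
      have h2 : φ.toLinearMap u = 1 := hφ.2
      rw [h2, mul_one] at this
      exact this
  let B : Set V₂ := {x | x ∈ C₂ ∧ ψ x = 1}
  have hB : IsCompact B := by
    apply Metric.isCompact_of_isClosed_isBounded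
    · exact hC₂.1.inter (isClosed_eq (by fun_prop) continuous_const)
    · refine isBounded_iff_forall_norm_le.2 ⟨1 / c, fun x hx => ?_⟩
      rw [le_div_iff₀ hc, mul_comm, ← hx.2]
      exact hψ x hx.1
  let K : Set (V₁ →L[ℝ] V₂) := (fun p : (V₁ →L[ℝ] ℝ) × V₂ => p.1.smulRight p.2) '' (D ×ˢ B)
  have hK : IsCompact K := by
    refine (hD.prod hB).image ?_
    exact (ContinuousLinearMap.smulRightL ℝ V₁ V₂).continuous₂
  have hKEB : convexHull ℝ K ⊆ {T | IsEntanglementBreaking C₁ C₂ T.toLinearMap} := by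
    apply convexHull_min
    · rintro _ ⟨⟨φ, x⟩, ⟨hφ, hx⟩, rfl⟩
      refine ⟨1, fun _ => φ.toLinearMap, fun _ => x, fun _ => hφ.1, fun _ => hx.1, fun v => ?_⟩
      simp
    · intro S hS T hT a b ha hb _
      exact EB_add (EB_smul hS ha) (EB_smul hT hb)
  let P' : V₁ →L[ℝ] V₂ := LinearMap.toContinuousLinearMap P
  have hnot : (ψ (P u))⁻¹ • P' ∉ convexHull ℝ K := by
    intro h
    apply hEB
    have h1 := EB_smul (hKEB h) hpos.le
    convert h1 using 1
    ext v
    simp [P', smul_smul, hpos.ne']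
  obtain ⟨F, s, hF1, hF2⟩ := geometric_hahn_banach_point_closed (convex_convexHull ℝ K)
    (isCompact_hull hK).isClosed hnot
  rw [map_smul, smul_eq_mul, inv_mul_eq_div, div_lt_iff₀ hpos] at hF1
  -- the functional on linear maps
  let G : (V₁ →ₗ[ℝ] V₂) →ₗ[ℝ] ℝ :=
    F.toLinearMap ∘ₗ (LinearMap.toContinuousLinearMap : (V₁ →ₗ[ℝ] V₂) ≃ₗ[ℝ] _).toLinearMap
      - s • (ψ.toLinearMap ∘ₗ LinearMap.applyₗ u)
  have hGP : G P < 0 := by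
    show F P' - s * ψ (P u) < 0
    linarith
  have hG : ∀ φ ∈ dualConeSet C₁, ∀ x ∈ C₂, 0 ≤ G (φ.smulRight x) := by
    intro φ hφ x hx
    rcases (hφ u huC).eq_or_lt with h | h
    · have : φ = 0 := by
        ext v
        have := hu φ hφ v
        rw [← h, mul_zero] at this
        simpa using this
      rw [this]
      have h0 : (0 : Module.Dual ℝ V₁).smulRight x = 0 := by ext; simp
      rw [h0, map_zero]
    rcases (hψ0 x hx).eq_or_lt with h' | h'
    · have : x = 0 := by
        have h1 := hψ x hx
        have := norm_nonneg x
        have : ‖x‖ = 0 := by nlinarith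
        exact norm_eq_zero.1 this
      rw [this]
      have h0 : φ.smulRight (0 : V₂) = 0 := by ext; simp
      rw [h0, map_zero]
    have hmem : (LinearMap.toContinuousLinearMap ((φ u)⁻¹ • φ)).smulRight ((ψ x)⁻¹ • x) ∈ K := by
      refine ⟨(LinearMap.toContinuousLinearMap ((φ u)⁻¹ • φ), (ψ x)⁻¹ • x), ⟨⟨?_, ?_⟩, ?_, ?_⟩, rfl⟩
      · intro y hy
        exact mul_nonneg (by positivity) (hφ y hy)
      · simp [h.ne']
      · exact hC₂.2.2.1 (by positivity) hx
      · simp [h'.ne']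
    have h1 := hF2 _ (subset_convexHull ℝ K hmem)
    have h2 : φ.smulRight x = (φ u * ψ x) •
        ((LinearMap.toContinuousLinearMap ((φ u)⁻¹ • φ)).smulRight ((ψ x)⁻¹ • x)).toLinearMap := by
      ext v
      simp only [LinearMap.smulRight_apply, LinearMap.smul_apply, ContinuousLinearMap.coe_coe,
        ContinuousLinearMap.smulRight_apply, LinearMap.coe_toContinuousLinearMap', smul_smul,
        smul_eq_mul]
      congr 1
      field_simp
    rw [h2, map_smul, smul_eq_mul]
    refine mul_nonneg (by positivity) ?_
    set T := (LinearMap.toContinuousLinearMap ((φ u)⁻¹ • φ)).smulRight ((ψ x)⁻¹ • x) with hT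
    have h3 : ψ (T u) = 1 := by
      simp [hT, h.ne', h'.ne']
    show 0 ≤ F (LinearMap.toContinuousLinearMap T.toLinearMap) - s * ψ (T u)
    have h4 : LinearMap.toContinuousLinearMap T.toLinearMap = T := by ext; rfl
    rw [h3, h4]
    linarith
  let q : V₂ →ₗ[ℝ] Module.Dual ℝ (Module.Dual ℝ V₁) :=
    LinearMap.mk₂ ℝ (fun x φ => G (φ.smulRight x))
      (fun x y φ => by rw [← map_add]; congr 1; ext; simp)
      (fun a x φ => by rw [← map_smul]; congr 1; ext v; simp only [LinearMap.smulRight_apply, LinearMap.smul_apply]; exact smul_comm _ _ _)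
      (fun x φ φ' => by rw [← map_add]; congr 1; ext; simp [add_smul])
      (fun a x φ => by rw [← map_smul]; congr 1; ext; simp [mul_smul])
  let Q : V₂ →ₗ[ℝ] V₁ := (Module.evalEquiv ℝ V₁).symm.toLinearMap ∘ₗ q
  have hQ : ∀ (x : V₂) (φ : Module.Dual ℝ V₁), φ (Q x) = G (φ.smulRight x) := fun x φ =>
    Module.apply_evalEquiv_symm_apply ℝ V₁ φ (q x)
  refine ⟨Q, fun x hx φ hφ => by rw [hQ]; exact hG φ hφ x hx, ?_⟩
  let b := Module.finBasis ℝ V₁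
  have : LinearMap.trace ℝ _ (Q ∘ₗ P) = G P := by
    rw [LinearMap.trace_eq_matrix_trace ℝ b, Matrix.trace]
    have h1 : ∀ i, (LinearMap.toMatrix b b (Q ∘ₗ P)).diag i
        = G ((b.coord i).smulRight (P (b i))) := by
      intro i
      rw [← hQ]
      simp [LinearMap.toMatrix_apply]
    simp only [h1]
    rw [← map_sum]
    congr 1
    refine b.ext fun j => ?_
    simp [LinearMap.sum_apply, Finsupp.single_apply]
  rw [this]
  exact hGP

theorem EA_pos {V₁ V₂ : Type*} [AddCommGroup V₁] [Module ℝ V₁]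
    [AddCommGroup V₂] [Module ℝ V₂] {C₁ : Set V₁} {C₂ : Set V₂} {P : V₁ →ₗ[ℝ] V₂}
    (hC₂ : Convex ℝ C₂) (h : IsEntanglementAnnihilating C₁ C₂ P) : ∀ x ∈ C₁, P x ∈ C₂ := by
  intro x hx
  have h1 := h 1 le_rfl (x := PiTensorProduct.tprod ℝ fun _ => x) (by
    intro φ hφ
    rw [dualPairing_tprod]
    exact Finset.prod_nonneg fun i _ => hφ i x hx)
  rw [PiTensorProduct.map_tprod] at h1
  have h2 : minTensorPow C₂ 1 ⊆
      (PiTensorProduct.subsingletonEquiv (R := ℝ) (s := fun _ => V₂) (0 : Fin 1)).toLinearMap ⁻¹' C₂ := by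
    apply convexHull_min
    · rintro _ ⟨y, hy, rfl⟩
      simpa using hy 0
    · exact hC₂.linear_preimage _
  simpa using h2 h1

theorem lorentz_proper (n : ℕ) : IsProperCone (lorentzCone n) := by
  refine ⟨?_, ?_, ?_, ?_, ?_⟩
  · exact isClosed_le (by fun_prop) (by fun_prop)
  · intro x hx y hy a b ha hb _
    have hx : ‖x.2‖ ≤ x.1 := hx
    have hy : ‖y.2‖ ≤ y.1 := hy
    show ‖a • x.2 + b • y.2‖ ≤ a * x.1 + b * y.1
    refine (norm_add_le _ _).trans ?_
    rw [norm_smul, norm_smul, Real.norm_of_nonneg ha, Real.norm_of_nonneg hb]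
    gcongr
  · intro c hc x hx
    have hx : ‖x.2‖ ≤ x.1 := hx
    show ‖c • x.2‖ ≤ c * x.1
    rw [norm_smul, Real.norm_of_nonneg hc.le]
    gcongr
  · intro v
    refine ⟨(|v.1| + v.1 + ‖v.2‖, v.2), ?_, (|v.1| + ‖v.2‖, 0), ?_, ?_⟩
    · show ‖v.2‖ ≤ |v.1| + v.1 + ‖v.2‖
      linarith [neg_abs_le v.1]
    · show ‖(0 : EuclideanSpace ℝ (Fin n))‖ ≤ |v.1| + ‖v.2‖
      rw [norm_zero]; positivity
    · refine Prod.ext ?_ ?_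
      · simp
      · simp
  · apply Set.Subset.antisymm
    · rintro v ⟨h1, h2⟩
      have h1 : ‖v.2‖ ≤ v.1 := h1
      have h2 : ‖-v.2‖ ≤ -v.1 := h2
      rw [norm_neg] at h2
      have h3 := norm_nonneg v.2
      have h4 : v.1 = 0 := by linarith
      have h5 : v.2 = 0 := norm_eq_zero.1 (by linarith)
      exact Prod.ext h4 h5
    · rintro _ rfl
      simp [lorentzCone]

/-- **Theorem (Aubrun–Müller-Hermes).** For every `n ≥ 1` and every proper cone `C`,
the pairs `(L_n, C)` and `(C, L_n)` are resilient; in particular `L_n` is resilient. -/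
theorem lorentz_pairs_resilient (n : ℕ) (hn : 1 ≤ n)
    (V : Type) [NormedAddCommGroup V] [NormedSpace ℝ V] [FiniteDimensional ℝ V]
    (C : Set V) (hC : IsProperCone C) :
    IsResilientPair (lorentzCone n) C ∧ IsResilientPair C (lorentzCone n) ∧
      IsResilientPair (lorentzCone n) (lorentzCone n) := by
  have main1 : ∀ (W : Type) [NormedAddCommGroup W] [NormedSpace ℝ W] [FiniteDimensional ℝ W]
      (D : Set W), IsProperCone D → IsResilientPair (lorentzCone n) D := by
    intro W _ _ _ D hD P hP
    by_contra hEB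
    obtain ⟨Q, hQ, ht⟩ := exists_witness (lorentz_proper n) hD P (EA_pos hD.2.1 hP) hEB
    have := WA_comp (WA_of_EA hP) Q (LinearMap.id) (C₀ := lorentzCone n) (C₃ := lorentzCone n)
      (fun x hx => mem_lorentz_of_dual _ (hQ x hx)) (fun x hx φ hφ => hφ x hx)
    have h2 := lorentz_trace _ this
    rw [LinearMap.comp_id] at h2
    linarith
  refine ⟨main1 V C hC, ?_, main1 _ _ (lorentz_proper n)⟩
  intro P hP
  by_contra hEB
  obtain ⟨Q, hQ, ht⟩ := exists_witness hC (lorentz_proper n) P (EA_pos (lorentz_proper n).2.1 hP) hEB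
  have := WA_comp (WA_of_EA hP) LinearMap.id Q (C₀ := lorentzCone n) (C₃ := lorentzCone n)
    (fun x hx => hx) hQ
  have h2 := lorentz_trace _ this
  rw [LinearMap.id_comp, LinearMap.trace_comp_comm'] at h2
  linarith

end
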